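/- arXiv:1804.10409 — 3 statements merged into one kernel-verified Lean document; each statement's English description precedes it below -/
import Mathlib

section
/- The digroup (Disgp⟨X^{±1} ∪ {e} | S⟩, class of [e]_1) is a free digroup on X: for every digroup (G, 1_G) and every function φ : X → G, there exists a unique digroup homomorphism φ* from Disgp⟨X^{±1} ∪ {e} | S⟩ to G with φ*(class of [x]_1) = φ(x) for all x ∈ X. -/
/-- The alphabet X^{±1} ∪ {e}: letters x, x⁻¹ (for x ∈ X) and the symbol e. -/
inductive Letter (X : Type*) : Type _
  | pos : X → Letter X
  | neg : X → Letter X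
  | e   : Letter X

/-- The free disemigroup on Y: an element [u]_m (u a nonempty word, 1 ≤ m ≤ |u|)
is encoded as the triple (prefix before the center, center letter, suffix),
so `⟨p, c, s⟩` stands for `[p·c·s]_{|p|+1}`. -/
structure FD (Y : Type*) where
  pre : List Y
  cen : Y
  suf : List Y

namespace FD

/-- [u]_m ⊢ [v]_n = [uv]_{|u|+n}. -/
def vd {Y : Type*} (a b : FD Y) : FD Y :=
  ⟨a.pre ++ a.cen :: (a.suf ++ b.pre), b.cen, b.suf⟩

/-- [u]_m ⊣ [v]_n = [uv]_m. -/
def dv {Y : Type*} (a b : FD Y) : FD Y :=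
  ⟨a.pre, a.cen, a.suf ++ b.pre ++ b.cen :: b.suf⟩

/-- The underlying associative word of [u]_m. -/
def word {Y : Type*} (a : FD Y) : List Y := a.pre ++ a.cen :: a.suf

end FD

/-- The congruence ρ(r) on the free disemigroup generated by a set of relations r:
the smallest equivalence relation containing r compatible with ⊢ and ⊣. -/
inductive DCongr {Y : Type*} (r : FD Y → FD Y → Prop) : FD Y → FD Y → Prop
  | of {a b : FD Y} : r a b → DCongr r a b
  | refl (a : FD Y) : DCongr r a a
  | symm {a b : FD Y} : DCongr r a b → DCongr r b a
  | trans {a b c : FD Y} : DCongr r a b → DCongr r b c → DCongr r a c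
  | vd {a b c d : FD Y} : DCongr r a b → DCongr r c d → DCongr r (a.vd c) (b.vd d)
  | dv {a b c d : FD Y} : DCongr r a b → DCongr r c d → DCongr r (a.dv c) (b.dv d)

/-- The defining relations S of the free digroup:
[xx⁻¹]₂ = [e]₁, [x⁻¹x]₁ = [e]₁, [ye]₁ = [y]₁, [ey]₂ = [y]₁. -/
def rel (X : Type*) : FD (Letter X) → FD (Letter X) → Prop := fun a b =>
  (∃ x : X, a = ⟨[Letter.pos x], Letter.neg x, []⟩ ∧ b = ⟨[], Letter.e, []⟩) ∨
  (∃ x : X, a = ⟨[], Letter.neg x, [Letter.pos x]⟩ ∧ b = ⟨[], Letter.e, []⟩) ∨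
  (∃ y : Letter X, a = ⟨[], y, [Letter.e]⟩ ∧ b = ⟨[], y, []⟩) ∨
  (∃ y : Letter X, a = ⟨[Letter.e], y, []⟩ ∧ b = ⟨[], y, []⟩)

/-- The quotient disemigroup Disgp⟨X^{±1} ∪ {e} | S⟩. -/
def DQ (X : Type*) := Quot (DCongr (rel X))

/-- The class of an element of the free disemigroup in the quotient. -/
def cls {X : Type*} (a : FD (Letter X)) : DQ X := Quot.mk _ a

/-- The operation ⊢ on the quotient. -/
def DQ.vd {X : Type*} : DQ X → DQ X → DQ X :=
  Quot.map₂ FD.vd (fun a _ _ h => DCongr.vd (DCongr.refl a) h)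
    (fun _ _ b h => DCongr.vd h (DCongr.refl b))

/-- The operation ⊣ on the quotient. -/
def DQ.dv {X : Type*} : DQ X → DQ X → DQ X :=
  Quot.map₂ FD.dv (fun a _ _ h => DCongr.dv (DCongr.refl a) h)
    (fun _ _ b h => DCongr.dv h (DCongr.refl b))

/-- The class of [e]₁, the unit of the free digroup. -/
def unitE (X : Type*) : DQ X := cls ⟨[], Letter.e, []⟩

/-- Words over X^{±1} are lists of pairs (x, b), where (x, true) is x and
(x, false) is x⁻¹, as for `FreeGroup`. This converts such a pair to a `Letter`. -/
def pm {X : Type*} (p : X × Bool) : Letter X :=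
  if p.2 then Letter.pos p.1 else Letter.neg p.1

/-- A word over X^{±1} is reduced (lies in gp⟨X⟩) if it has no adjacent pair
of mutually inverse letters. -/
def Reduced {X : Type*} (L : List (X × Bool)) : Prop :=
  List.Chain' (fun a b => ¬(a.1 = b.1 ∧ a.2 = !b.2)) L

/-- Delete all occurrences of e from a word over X^{±1} ∪ {e} (the map τ). -/
def strip {X : Type*} (L : List (Letter X)) : List (X × Bool) :=
  L.flatMap fun l => match l with
    | Letter.pos x => [(x, true)]
    | Letter.neg x => [(x, false)]
    | Letter.e => []

/-- ŵ: the reduced word of w, obtained by deleting the e's and freely reducing. -/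
noncomputable def hat {X : Type*} (L : List (Letter X)) : List (X × Bool) :=
  letI := Classical.decEq X
  FreeGroup.reduce (strip L)

/-- λ(w): the (1-based) position of the first letter of w lying in X⁻¹. -/
def lam {X : Type*} (L : List (X × Bool)) : ℕ := L.findIdx (fun p => !p.2) + 1

/-- The element [L]_m of the free disemigroup determined by a word L over X^{±1}
and a center position m. -/
def toNF {X : Type*} (L : List (X × Bool)) (m : ℕ) : FD (Letter X) :=
  ⟨(L.take (m - 1)).map pm, ((L[m-1]?).map pm).getD Letter.e, (L.drop m).map pm⟩

/-- Ω_e = {[eu]₁ : u ∈ X*}. -/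
def OmegaE (X : Type*) : Set (FD (Letter X)) :=
  {a | ∃ u : List X, a = ⟨[], Letter.e, u.map Letter.pos⟩}

/-- Ω_X = {[uxv]_{|u|+1} : x ∈ X, u, v ∈ gp⟨X⟩}. -/
def OmegaX (X : Type*) : Set (FD (Letter X)) :=
  {a | ∃ (x : X) (u v : List (X × Bool)), Reduced u ∧ Reduced v ∧
    a = ⟨u.map pm, Letter.pos x, v.map pm⟩}

/-- Ω_{X⁻¹} = {[ux⁻¹v]_{|u|+1} : x ∈ X, u ∈ X*, v ∈ (X^{±1})*, ux⁻¹v reduced}. -/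
def OmegaInv (X : Type*) : Set (FD (Letter X)) :=
  {a | ∃ (x : X) (u : List X) (v : List (X × Bool)),
    Reduced ((u.map fun y => (y, true)) ++ (x, false) :: v) ∧
    a = ⟨u.map Letter.pos, Letter.neg x, v.map pm⟩}

/-- Inversion of a single letter. -/
def linv {X : Type*} : Letter X → Letter X
  | Letter.pos x => Letter.neg x
  | Letter.neg x => Letter.pos x
  | Letter.e => Letter.e

/-- The formal inverse w⁻¹ of a word over X^{±1}. -/
def invw {X : Type*} (L : List (X × Bool)) : List (X × Bool) :=
  L.reverse.map fun p => (p.1, !p.2)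

/-- A disemigroup: two associative operations `vd` (⊢) and `dv` (⊣)
satisfying the dialgebra axioms G1–G4. -/
class Disemigroup (G : Type*) where
  vd : G → G → G
  dv : G → G → G
  vd_assoc : ∀ a b c : G, vd (vd a b) c = vd a (vd b c)
  dv_assoc : ∀ a b c : G, dv (dv a b) c = dv a (dv b c)
  bar1 : ∀ a b c : G, dv a (vd b c) = dv a (dv b c)
  bar2 : ∀ a b c : G, vd (dv a b) c = vd (vd a b) c
  bar3 : ∀ a b c : G, vd a (dv b c) = dv (vd a b) c

/-- A digroup: a disemigroup with a unit `one` and inversion `dag` (†). -/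
class Digroup (G : Type*) extends Disemigroup G where
  one : G
  dag : G → G
  one_vd : ∀ a : G, vd one a = a
  dv_one : ∀ a : G, dv a one = a
  vd_dag : ∀ a : G, vd a (dag a) = one
  dag_dv : ∀ a : G, dv (dag a) a = one

/-!
Using the axioms, every product in a disemigroup is brought to the form
`y₁ ⊢ (⋯ ⊢ (yₖ ⊢ ((c ⊣ z₁) ⊣ ⋯ ⊣ zₗ)))`, which is exactly what an element of `FD Y` records, so
`FD Y` is free and maps out of a presented disemigroup are maps on generators respecting the
relations. A digroup homomorphism must in addition send `x⁻¹` to `φ(x)†`: the relation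
`[x⁻¹x]₁ = [e]₁` forces this, because `b ⊣ a = 1` already determines `b`.
-/

namespace Disemigroup

/-- A homomorphism of disemigroups, as a predicate on functions: a map preserving `⊢` and `⊣`. -/
structure IsHom {G H : Type*} [Disemigroup G] [Disemigroup H] (f : G → H) : Prop where
  map_vd : ∀ a b : G, f (vd a b) = vd (f a) (f b)
  map_dv : ∀ a b : G, f (dv a b) = dv (f a) (f b)

theorem IsHom.comp {G H K : Type*} [Disemigroup G] [Disemigroup H] [Disemigroup K]
    {g : H → K} {f : G → H} (hg : IsHom g) (hf : IsHom f) : IsHom (g ∘ f) where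
  map_vd a b := by simp only [Function.comp_apply, hf.map_vd, hg.map_vd]
  map_dv a b := by simp only [Function.comp_apply, hf.map_dv, hg.map_dv]

variable {Y G H : Type*} [Disemigroup G] [Disemigroup H]

/-- The left action of words through `⊢`: for `w = y₁⋯yₖ` this is `ψ y₁ ⊢ (⋯ ⊢ (ψ yₖ ⊢ g))`. -/
def vdWord (ψ : Y → G) (w : List Y) (g : G) : G :=
  w.foldr (fun y h => vd (ψ y) h) g

/-- The right action of words through `⊣`: for `w = y₁⋯yₖ` this is `((g ⊣ ψ y₁) ⊣ ⋯) ⊣ ψ yₖ`. -/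
def dvWord (ψ : Y → G) (g : G) (w : List Y) : G :=
  w.foldl (fun h y => dv h (ψ y)) g

theorem vdWord_cons (ψ : Y → G) (y : Y) (w : List Y) (g : G) :
    vdWord ψ (y :: w) g = vd (ψ y) (vdWord ψ w g) := rfl

theorem vdWord_append (ψ : Y → G) (u w : List Y) (g : G) :
    vdWord ψ (u ++ w) g = vdWord ψ u (vdWord ψ w g) :=
  List.foldr_append

theorem dvWord_cons (ψ : Y → G) (g : G) (y : Y) (w : List Y) :
    dvWord ψ g (y :: w) = dvWord ψ (dv g (ψ y)) w := rfl

theorem dvWord_append (ψ : Y → G) (g : G) (u w : List Y) :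
    dvWord ψ g (u ++ w) = dvWord ψ (dvWord ψ g u) w :=
  List.foldl_append

theorem vdWord_vd (ψ : Y → G) (w : List Y) (g h : G) :
    vd (vdWord ψ w g) h = vdWord ψ w (vd g h) := by
  induction w with
  | nil => rfl
  | cons y w ih => simp only [vdWord_cons, vd_assoc, ih]

theorem dvWord_vd (ψ : Y → G) (g : G) (w : List Y) (h : G) :
    vd (dvWord ψ g w) h = vd g (vdWord ψ w h) := by
  induction w generalizing g with
  | nil => rfl
  | cons y w ih => simp only [vdWord_cons, dvWord_cons, ih, bar2, vd_assoc]

theorem vdWord_dv (ψ : Y → G) (w : List Y) (g h : G) :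
    dv (vdWord ψ w g) h = vdWord ψ w (dv g h) := by
  induction w with
  | nil => rfl
  | cons y w ih => simp only [vdWord_cons, ← bar3, ih]

theorem dv_vdWord (ψ : Y → G) (g : G) (w : List Y) (h : G) :
    dv g (vdWord ψ w h) = dv (dvWord ψ g w) h := by
  induction w generalizing g with
  | nil => rfl
  | cons y w ih => simp only [vdWord_cons, dvWord_cons, ← ih, bar1, dv_assoc]

theorem dv_dvWord (ψ : Y → G) (g h : G) (w : List Y) :
    dv g (dvWord ψ h w) = dvWord ψ (dv g h) w := by
  induction w generalizing h with
  | nil => rfl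
  | cons y w ih => simp only [dvWord_cons, ih, dv_assoc]

theorem IsHom.map_vdWord {f : G → H} (hf : IsHom f) (ψ : Y → G) (w : List Y) (g : G) :
    f (vdWord ψ w g) = vdWord (f ∘ ψ) w (f g) := by
  induction w with
  | nil => rfl
  | cons y w ih => simp only [vdWord_cons, hf.map_vd, ih, Function.comp_apply]

theorem IsHom.map_dvWord {f : G → H} (hf : IsHom f) (ψ : Y → G) (g : G) (w : List Y) :
    f (dvWord ψ g w) = dvWord (f ∘ ψ) (f g) w := by
  induction w generalizing g with
  | nil => rfl
  | cons y w ih => simp only [dvWord_cons, ih, hf.map_dv, Function.comp_apply]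

end Disemigroup

namespace FD

open Disemigroup (IsHom vdWord dvWord)

variable {Y G H : Type*} [Disemigroup G] [Disemigroup H]

instance : Disemigroup (FD Y) where
  vd := FD.vd
  dv := FD.dv
  vd_assoc a b c := by simp [FD.vd]
  dv_assoc a b c := by simp [FD.dv]
  bar1 a b c := by simp [FD.vd, FD.dv]
  bar2 a b c := by simp [FD.vd, FD.dv]
  bar3 a b c := by simp [FD.vd, FD.dv]

/-- The generator `[y]₁` of the free disemigroup. -/
def of (y : Y) : FD Y := ⟨[], y, []⟩

/-- The extension of a map on generators to the free disemigroup, sending `[ucv]_{|u|+1}` to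
`u ⊢ (c ⊣ v)`. -/
def lift (ψ : Y → G) (a : FD Y) : G :=
  vdWord ψ a.pre (dvWord ψ (ψ a.cen) a.suf)

theorem isHom_lift (ψ : Y → G) : IsHom (lift ψ) where
  map_vd a b := by
    change vdWord ψ (a.pre ++ a.cen :: (a.suf ++ b.pre)) (dvWord ψ (ψ b.cen) b.suf) = _
    rw [Disemigroup.vdWord_append, Disemigroup.vdWord_cons, Disemigroup.vdWord_append, lift, lift,
      Disemigroup.vdWord_vd, Disemigroup.dvWord_vd]
  map_dv a b := by
    change vdWord ψ a.pre (dvWord ψ (ψ a.cen) (a.suf ++ b.pre ++ b.cen :: b.suf)) = _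
    rw [Disemigroup.dvWord_append, Disemigroup.dvWord_append, Disemigroup.dvWord_cons, lift, lift,
      Disemigroup.vdWord_dv, Disemigroup.dv_vdWord, Disemigroup.dv_dvWord]

theorem vdWord_of (w : List Y) (a : FD Y) : vdWord of w a = ⟨w ++ a.pre, a.cen, a.suf⟩ := by
  induction w with
  | nil => rfl
  | cons y w ih => rw [Disemigroup.vdWord_cons, ih]; rfl

theorem dvWord_of (a : FD Y) (w : List Y) : dvWord of a w = ⟨a.pre, a.cen, a.suf ++ w⟩ := by
  induction w generalizing a with
  | nil => simp only [dvWord, List.foldl_nil, List.append_nil]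
  | cons y w ih =>
    rw [Disemigroup.dvWord_cons, ih]
    simp [Disemigroup.dv, FD.dv, of]

theorem lift_of (a : FD Y) : lift of a = a := by
  simp only [lift, vdWord_of, dvWord_of, of, List.append_nil, List.nil_append]

theorem map_lift {f : G → H} (hf : IsHom f) (ψ : Y → G) (a : FD Y) :
    f (lift ψ a) = lift (f ∘ ψ) a := by
  simp only [lift, hf.map_vdWord, hf.map_dvWord, Function.comp_apply]

theorem hom_ext {f g : FD Y → G} (hf : IsHom f) (hg : IsHom g)
    (h : ∀ y, f (of y) = g (of y)) : f = g := by
  have hfg : f ∘ of = g ∘ of := funext h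
  funext a
  calc f a = f (lift of a) := by rw [lift_of]
    _ = lift (f ∘ of) a := map_lift hf of a
    _ = lift (g ∘ of) a := by rw [hfg]
    _ = g (lift of a) := (map_lift hg of a).symm
    _ = g a := by rw [lift_of]

end FD

open Disemigroup (IsHom)

theorem DCongr.map_eq {Y G : Type*} [Disemigroup G] {r : FD Y → FD Y → Prop} {f : FD Y → G}
    (hf : IsHom f) (hr : ∀ a b, r a b → f a = f b) {a b : FD Y} (h : DCongr r a b) :
    f a = f b := by
  induction h with
  | of h => exact hr _ _ h
  | refl => rfl
  | symm _ ih => exact ih.symm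
  | trans _ _ ih₁ ih₂ => exact ih₁.trans ih₂
  | vd _ _ ih₁ ih₂ => exact (hf.map_vd _ _).trans (ih₁ ▸ ih₂ ▸ (hf.map_vd _ _).symm)
  | dv _ _ ih₁ ih₂ => exact (hf.map_dv _ _).trans (ih₁ ▸ ih₂ ▸ (hf.map_dv _ _).symm)

/-- The presented disemigroup `Disgp⟨Y | r⟩`; `DQ X` is the case `r = rel X`, definitionally
and with the same operations. -/
def PresentedDisemigroup {Y : Type*} (r : FD Y → FD Y → Prop) : Type _ := Quot (DCongr r)

namespace PresentedDisemigroup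

variable {Y G : Type*} [Disemigroup G] {r : FD Y → FD Y → Prop}

/-- The quotient map from the free disemigroup onto `Disgp⟨Y | r⟩`. -/
def mk (r : FD Y → FD Y → Prop) (a : FD Y) : PresentedDisemigroup r := Quot.mk _ a

theorem mk_surjective : Function.Surjective (mk r) := Quot.mk_surjective

instance : Disemigroup (PresentedDisemigroup r) where
  vd := Quot.map₂ FD.vd (fun a _ _ h => .vd (.refl a) h) (fun _ _ b h => .vd h (.refl b))
  dv := Quot.map₂ FD.dv (fun a _ _ h => .dv (.refl a) h) (fun _ _ b h => .dv h (.refl b))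
  vd_assoc := by
    rintro ⟨a⟩ ⟨b⟩ ⟨c⟩
    exact congrArg (mk r) (Disemigroup.vd_assoc a b c)
  dv_assoc := by
    rintro ⟨a⟩ ⟨b⟩ ⟨c⟩
    exact congrArg (mk r) (Disemigroup.dv_assoc a b c)
  bar1 := by
    rintro ⟨a⟩ ⟨b⟩ ⟨c⟩
    exact congrArg (mk r) (Disemigroup.bar1 a b c)
  bar2 := by
    rintro ⟨a⟩ ⟨b⟩ ⟨c⟩
    exact congrArg (mk r) (Disemigroup.bar2 a b c)
  bar3 := by
    rintro ⟨a⟩ ⟨b⟩ ⟨c⟩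
    exact congrArg (mk r) (Disemigroup.bar3 a b c)

theorem isHom_mk : IsHom (mk r) := ⟨fun _ _ => rfl, fun _ _ => rfl⟩

theorem hom_ext {f g : PresentedDisemigroup r → G} (hf : IsHom f) (hg : IsHom g)
    (h : ∀ y, f (mk r (.of y)) = g (mk r (.of y))) : f = g :=
  mk_surjective.injective_comp_right (FD.hom_ext (hf.comp isHom_mk) (hg.comp isHom_mk) h)

/-- The map out of `Disgp⟨Y | r⟩` induced by a map on generators that respects `r`. -/
def lift (ψ : Y → G) (hr : ∀ a b, r a b → FD.lift ψ a = FD.lift ψ b) :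
    PresentedDisemigroup r → G :=
  Quot.lift (FD.lift ψ) fun _ _ => DCongr.map_eq (FD.isHom_lift ψ) hr

theorem isHom_lift (ψ : Y → G) (hr : ∀ a b, r a b → FD.lift ψ a = FD.lift ψ b) :
    IsHom (lift ψ hr) where
  map_vd := by
    rintro ⟨a⟩ ⟨b⟩
    exact (FD.isHom_lift ψ).map_vd a b
  map_dv := by
    rintro ⟨a⟩ ⟨b⟩
    exact (FD.isHom_lift ψ).map_dv a b

theorem existsUnique_isHom (ψ : Y → G) (hr : ∀ a b, r a b → FD.lift ψ a = FD.lift ψ b) :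
    ∃! f : PresentedDisemigroup r → G, IsHom f ∧ ∀ y, f (mk r (.of y)) = ψ y := by
  refine ⟨lift ψ hr, ⟨isHom_lift ψ hr, fun _ => rfl⟩, ?_⟩
  rintro f ⟨hf, hfψ⟩
  exact hom_ext hf (isHom_lift ψ hr) hfψ

end PresentedDisemigroup

namespace Digroup

open Disemigroup (dv)

variable {G : Type*} [Digroup G]

theorem eq_one_dv_dag_of_dv_eq_one {a b : G} (h : dv b a = one) : b = dv one (dag a) :=
  calc b = dv b one := (dv_one b).symm
    _ = dv b (Disemigroup.vd a (dag a)) := by rw [vd_dag]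
    _ = dv (dv b a) (dag a) := by rw [Disemigroup.bar1, Disemigroup.dv_assoc]
    _ = dv one (dag a) := by rw [h]

theorem eq_dag_of_dv_eq_one {a b : G} (h : dv b a = one) : b = dag a :=
  (eq_one_dv_dag_of_dv_eq_one h).trans (eq_one_dv_dag_of_dv_eq_one (dag_dv a)).symm

/-- The only possible values on the letters of `X^{±1} ∪ {e}` of a digroup homomorphism
extending `φ`. -/
def letterMap {X : Type*} (φ : X → G) : Letter X → G
  | .pos x => φ x
  | .neg x => dag (φ x)
  | .e => one

theorem lift_letterMap_eq_of_rel {X : Type*} (φ : X → G) (a b : FD (Letter X))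
    (h : rel X a b) : FD.lift (letterMap φ) a = FD.lift (letterMap φ) b := by
  rcases h with ⟨x, rfl, rfl⟩ | ⟨x, rfl, rfl⟩ | ⟨y, rfl, rfl⟩ | ⟨y, rfl, rfl⟩
  · exact vd_dag (φ x)
  · exact dag_dv (φ x)
  · exact dv_one (letterMap φ y)
  · exact one_vd (letterMap φ y)

end Digroup

theorem DQ.neg_dv_pos {X : Type*} (x : X) :
    DQ.dv (cls ⟨[], .neg x, []⟩) (cls ⟨[], .pos x, []⟩) = unitE X :=
  Quot.sound (.of (.inr (.inl ⟨x, rfl, rfl⟩)))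

/-- (Disgp⟨X^{±1} ∪ {e} | S⟩, class of [e]₁) is a free digroup on X:
every map φ : X → G into a digroup extends uniquely to a digroup
homomorphism sending the class of [x]₁ to φ(x). -/
theorem DQ_is_free_digroup (X : Type*) (G : Type*) [Digroup G] (φ : X → G) :
    ∃! f : DQ X → G,
      ((∀ a b : DQ X, f (DQ.vd a b) = Disemigroup.vd (f a) (f b)) ∧
       (∀ a b : DQ X, f (DQ.dv a b) = Disemigroup.dv (f a) (f b)) ∧
       f (unitE X) = Digroup.one) ∧
      ∀ x : X, f (cls ⟨[], Letter.pos x, []⟩) = φ x := by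
  obtain ⟨f, ⟨hf, hf_letter⟩, hf_unique⟩ :=
    PresentedDisemigroup.existsUnique_isHom (Digroup.letterMap φ)
      (Digroup.lift_letterMap_eq_of_rel φ)
  refine ⟨f, ⟨⟨hf.map_vd, hf.map_dv, hf_letter .e⟩, fun x => hf_letter (.pos x)⟩, ?_⟩
  rintro g ⟨⟨hg_vd, hg_dv, hg_one⟩, hg_pos⟩
  have hg_neg (x : X) : g (cls ⟨[], .neg x, []⟩) = Digroup.dag (φ x) := by
    apply Digroup.eq_dag_of_dv_eq_one
    rw [← hg_pos x, ← hg_dv, DQ.neg_dv_pos, hg_one]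
  refine hf_unique g ⟨⟨hg_vd, hg_dv⟩, ?_⟩
  rintro (x | x | _)
  exacts [hg_pos x, hg_neg x, hg_one]
end

section
/- The quotient map from the free disemigroup [(X^{±1} ∪ {e})⁺]_ω onto Disgp⟨X^{±1} ∪ {e} | S⟩ restricts to a bijection from Ω_e ∪ Ω_X ∪ Ω_{X⁻¹} onto Disgp⟨X^{±1} ∪ {e} | S⟩; that is, every element of the quotient is the class of exactly one element of Ω_e ∪ Ω_X ∪ Ω_{X⁻¹}. -/
/-!
Let `G` be the free group on `X`. As in Kinyon's description of digroups, the quotient is `G × E`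
with `(g, i) ⊢ (h, j) = (g * h, g • j)` and `(g, i) ⊣ (h, j) = (g * h, i)`, where `E` is the
`G`-set of bar-units; here `E` consists of a fixed point, the bar-unit `e`, and of a free orbit for
each `x ∈ X`. The coordinates in `G × E` are invariant under the congruence since they are given by
a homomorphism that respects the defining relations.

Conversely, the coordinates determine the class. Words with the same value in `G` are
interchangeable on either side of the center. A central letter `x⁻¹` can be moved to either side,
leaving `e` at the center; hence a central `e` commutes with every letter, and an element whose
center is not in `X` is congruent to `[ew]₁`, where `w` is its word. Each `(g, i)` therefore has one
normal form: for `i = e`, the reduced word of `g` centered at its first letter in `X⁻¹`, or with a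
central `e` in front if there is none; for the other `i`, reduced words on both sides of a central
`x ∈ X`.
-/

namespace FD

variable {Y G E : Type*} [Monoid G] [MulAction G E]

/-- The homomorphism from the free disemigroup on `Y` to Kinyon's disemigroup on `G × E`, whose
operations are `(g, i) ⊢ (h, j) = (g * h, g • j)` and `(g, i) ⊣ (h, j) = (g * h, i)`, that sends
each letter `y` to `(φ y, ε y)`. -/
def eval (φ : Y → G) (ε : Y → E) (a : FD Y) : G × E :=
  ((a.word.map φ).prod, (a.pre.map φ).prod • ε a.cen)

theorem eval_vd (φ : Y → G) (ε : Y → E) (a b : FD Y) :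
    (a.vd b).eval φ ε =
      ((a.eval φ ε).1 * (b.eval φ ε).1, (a.eval φ ε).1 • (b.eval φ ε).2) := by
  simp [eval, vd, word, mul_smul, mul_assoc]

theorem eval_dv (φ : Y → G) (ε : Y → E) (a b : FD Y) :
    (a.dv b).eval φ ε = ((a.eval φ ε).1 * (b.eval φ ε).1, (a.eval φ ε).2) := by
  simp [eval, dv, word, mul_assoc]

end FD

namespace DCongr

variable {Y : Type*} {r : FD Y → FD Y → Prop}

instance : Trans (DCongr r) (DCongr r) (DCongr r) := ⟨DCongr.trans⟩

theorem equivalence (r : FD Y → FD Y → Prop) : Equivalence (DCongr r) :=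
  ⟨DCongr.refl, DCongr.symm, DCongr.trans⟩

theorem eval_eq {G E : Type*} [Monoid G] [MulAction G E] {φ : Y → G} {ε : Y → E}
    (hr : ∀ a b, r a b → a.eval φ ε = b.eval φ ε) {a b : FD Y} (h : DCongr r a b) :
    a.eval φ ε = b.eval φ ε := by
  induction h with
  | of h => exact hr _ _ h
  | refl => rfl
  | symm _ ih => exact ih.symm
  | trans _ _ ih₁ ih₂ => exact ih₁.trans ih₂
  | vd _ _ ih₁ ih₂ => rw [FD.eval_vd, FD.eval_vd, ih₁, ih₂]
  | dv _ _ ih₁ ih₂ => rw [FD.eval_dv, FD.eval_dv, ih₁, ih₂]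

variable {p p' s s' : List Y} {c c' : Y}

theorem append_pre (u : List Y) (h : DCongr r ⟨p, c, s⟩ ⟨p', c', s'⟩) :
    DCongr r ⟨u ++ p, c, s⟩ ⟨u ++ p', c', s'⟩ := by
  cases u with
  | nil => exact h
  | cons y u => exact DCongr.vd (DCongr.refl ⟨[], y, u⟩) h

theorem append_suf (v : List Y) (h : DCongr r ⟨p, c, s⟩ ⟨p', c', s'⟩) :
    DCongr r ⟨p, c, s ++ v⟩ ⟨p', c', s' ++ v⟩ := by
  cases v with
  | nil => simpa only [List.append_nil] using h
  | cons y v => simpa [FD.dv] using DCongr.dv h (DCongr.refl ⟨[], y, v⟩)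

end DCongr

section SideCongruence

variable {Y : Type*} {r : FD Y → FD Y → Prop}

/-- The congruence on the free monoid that identifies two words when attaching either of them to
the left end, or to the right end, of any element of the free disemigroup gives `DCongr r`-congruent
elements. -/
def sideCon (r : FD Y → FD Y → Prop) : Con (FreeMonoid Y) where
  r w w' := (∀ p c s, DCongr r ⟨w.toList ++ p, c, s⟩ ⟨w'.toList ++ p, c, s⟩) ∧
    ∀ p c s, DCongr r ⟨p, c, s ++ w.toList⟩ ⟨p, c, s ++ w'.toList⟩
  iseqv :=
    { refl := fun _ => ⟨fun _ _ _ => DCongr.refl _, fun _ _ _ => DCongr.refl _⟩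
      symm := fun h => ⟨fun p c s => (h.1 p c s).symm, fun p c s => (h.2 p c s).symm⟩
      trans := fun h h' => ⟨fun p c s => (h.1 p c s).trans (h'.1 p c s),
        fun p c s => (h.2 p c s).trans (h'.2 p c s)⟩ }
  mul' := by
    intro u u' v v' hu hv
    constructor <;> intro p c s
    · simpa only [FreeMonoid.toList_mul, List.append_assoc] using
        (hu.1 (v.toList ++ p) c s).trans ((hv.1 p c s).append_pre u'.toList)
    · simpa only [FreeMonoid.toList_mul, List.append_assoc] using
        ((hu.2 p c s).append_suf v.toList).trans (hv.2 p c (s ++ u'.toList))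

theorem sideCon_one_of_dcongr {w : List Y} (hpre : ∀ c, DCongr r ⟨w, c, []⟩ ⟨[], c, []⟩)
    (hsuf : ∀ c, DCongr r ⟨[], c, w⟩ ⟨[], c, []⟩) : sideCon r (FreeMonoid.ofList w) 1 := by
  constructor
  · rintro (_ | ⟨y, p⟩) c s
    · simpa using (hpre c).append_suf s
    · exact DCongr.vd (hpre y) (DCongr.refl ⟨p, c, s⟩)
  · intro p c s
    obtain rfl | ⟨s, y, rfl⟩ := s.eq_nil_or_concat'
    · simpa using (hsuf c).append_pre p
    · simpa [FD.dv] using DCongr.dv (DCongr.refl ⟨p, c, s⟩) (hsuf y)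

end SideCongruence

namespace Letter

variable {X : Type*}

/-- The element of the free group represented by a letter. -/
def val : Letter X → FreeGroup X
  | pos x => FreeGroup.of x
  | neg x => (FreeGroup.of x)⁻¹
  | e => 1

/-- The bar-unit attached to a central letter: `none` stands for the bar-unit `e`, which the free
group fixes, and `some ⟨x, p⟩` for the bar-unit `[p x (p x)⁻¹]_{|p|+1}`. -/
def halo : Letter X → Option (Σ _ : X, FreeGroup X)
  | pos x => some ⟨x, 1⟩
  | neg _ => none
  | e => none

theorem prod_map_val_map_pm (L : List (X × Bool)) :
    ((L.map pm).map val).prod = FreeGroup.mk L := by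
  induction L with
  | nil => rfl
  | cons a L ih =>
    have hletter : val (pm a) = FreeGroup.mk [a] := by obtain ⟨x, _ | _⟩ := a <;> rfl
    rw [List.map_cons, List.map_cons, List.prod_cons, ih, hletter, FreeGroup.mul_mk]
    rfl

theorem prod_map_val_map_pm_toWord [DecidableEq X] (g : FreeGroup X) :
    ((g.toWord.map pm).map val).prod = g := by
  rw [prod_map_val_map_pm, FreeGroup.mk_toWord]

theorem map_pm_map_true (u : List X) : (u.map fun y => (y, true)).map pm = u.map pos := by
  simp [pm]

end Letter

/-- The coordinates in `G × E`, for `G` the free group on `X` and `E` the set of bar-units, of the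
element of the free digroup represented by `a`. -/
def FD.coord {X : Type*} : FD (Letter X) → FreeGroup X × Option (Σ _ : X, FreeGroup X) :=
  FD.eval Letter.val Letter.halo

section Presentation

variable {X : Type*}

theorem cls_eq_cls_iff {a b : FD (Letter X)} : cls a = cls b ↔ DCongr (rel X) a b :=
  (DCongr.equivalence _).quot_mk_eq_iff a b

theorem DCongr.coord_eq {a b : FD (Letter X)} (h : DCongr (rel X) a b) : a.coord = b.coord := by
  refine h.eval_eq ?_
  rintro _ _ (⟨x, rfl, rfl⟩ | ⟨x, rfl, rfl⟩ | ⟨y, rfl, rfl⟩ | ⟨y, rfl, rfl⟩) <;>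
    simp [FD.eval, FD.word, Letter.val, Letter.halo]

theorem dcongr_pos_neg (x : X) :
    DCongr (rel X) ⟨[Letter.pos x], Letter.neg x, []⟩ ⟨[], Letter.e, []⟩ :=
  DCongr.of (Or.inl ⟨x, rfl, rfl⟩)

theorem dcongr_neg_pos (x : X) :
    DCongr (rel X) ⟨[], Letter.neg x, [Letter.pos x]⟩ ⟨[], Letter.e, []⟩ :=
  DCongr.of (Or.inr (Or.inl ⟨x, rfl, rfl⟩))

theorem dcongr_suf_e (y : Letter X) : DCongr (rel X) ⟨[], y, [Letter.e]⟩ ⟨[], y, []⟩ :=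
  DCongr.of (Or.inr (Or.inr (Or.inl ⟨y, rfl, rfl⟩)))

theorem dcongr_pre_e (y : Letter X) : DCongr (rel X) ⟨[Letter.e], y, []⟩ ⟨[], y, []⟩ :=
  DCongr.of (Or.inr (Or.inr (Or.inr ⟨y, rfl, rfl⟩)))

theorem sideCon_one_of_dcongr_e {a : FD (Letter X)} (h : DCongr (rel X) a ⟨[], Letter.e, []⟩) :
    sideCon (rel X) (FreeMonoid.ofList a.word) 1 :=
  sideCon_one_of_dcongr
    (fun c => by
      simpa [FD.vd, FD.word] using (h.vd (DCongr.refl ⟨[], c, []⟩)).trans (dcongr_pre_e c))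
    (fun c => by
      simpa [FD.dv, FD.word] using ((DCongr.refl ⟨[], c, []⟩).dv h).trans (dcongr_suf_e c))

/-- The letter `x`, as a unit of the monoid of words modulo `sideCon`, with inverse `x⁻¹`. -/
def sideUnit (x : X) : (sideCon (rel X)).Quotientˣ where
  val := (sideCon (rel X)).mk' (FreeMonoid.of (Letter.pos x))
  inv := (sideCon (rel X)).mk' (FreeMonoid.of (Letter.neg x))
  val_inv := (sideCon (rel X)).eq.2 (sideCon_one_of_dcongr_e (dcongr_pos_neg x))
  inv_val := (sideCon (rel X)).eq.2 (sideCon_one_of_dcongr_e (dcongr_neg_pos x))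

/-- The homomorphism from the free group to the monoid of words modulo `sideCon` that sends a group
element to the class of any word representing it. -/
def sideHom (X : Type*) : FreeGroup X →* (sideCon (rel X)).Quotient :=
  (Units.coeHom _).comp (FreeGroup.lift sideUnit)

theorem sideHom_comp_lift_val :
    (sideHom X).comp (FreeMonoid.lift Letter.val) = (sideCon (rel X)).mk' := by
  refine FreeMonoid.hom_eq fun y => ?_
  cases y with
  | pos x => simp [sideHom, Letter.val, sideUnit]
  | neg x => simp [sideHom, Letter.val, sideUnit]
  | e =>
    have he : (sideCon (rel X)).mk' (FreeMonoid.of Letter.e) = 1 :=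
      (sideCon (rel X)).eq.2 (sideCon_one_of_dcongr_e (DCongr.refl _))
    rw [he, MonoidHom.comp_apply, FreeMonoid.lift_eval_of, Letter.val, map_one]

theorem sideCon_of_prod_map_val_eq {w w' : List (Letter X)}
    (h : (w.map Letter.val).prod = (w'.map Letter.val).prod) :
    sideCon (rel X) (FreeMonoid.ofList w) (FreeMonoid.ofList w') := by
  refine (sideCon (rel X)).eq.1 ?_
  have hmk (v : List (Letter X)) : sideHom X (v.map Letter.val).prod =
      (sideCon (rel X)).mk' (FreeMonoid.ofList v) := by
    rw [← sideHom_comp_lift_val, MonoidHom.comp_apply, FreeMonoid.lift_apply,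
      FreeMonoid.toList_ofList]
  exact (hmk w).symm.trans ((congrArg _ h).trans (hmk w'))

theorem dcongr_of_prod_map_val_eq {p p' s s' : List (Letter X)} (c : Letter X)
    (hp : (p.map Letter.val).prod = (p'.map Letter.val).prod)
    (hs : (s.map Letter.val).prod = (s'.map Letter.val).prod) :
    DCongr (rel X) ⟨p, c, s⟩ ⟨p', c, s'⟩ := by
  have hpre : DCongr (rel X) ⟨p, c, s⟩ ⟨p', c, s⟩ := by
    simpa using (sideCon_of_prod_map_val_eq hp).1 [] c s
  exact hpre.trans ((sideCon_of_prod_map_val_eq hs).2 p' c [])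

theorem dcongr_neg_e_suf (x : X) :
    DCongr (rel X) ⟨[], Letter.neg x, []⟩ ⟨[], Letter.e, [Letter.neg x]⟩ :=
  calc DCongr (rel X) ⟨[], Letter.neg x, []⟩ ⟨[], Letter.neg x, [Letter.pos x, Letter.neg x]⟩ :=
        dcongr_of_prod_map_val_eq _ rfl (by simp [Letter.val])
    DCongr (rel X) _ ⟨[], Letter.e, [Letter.neg x]⟩ :=
        (dcongr_neg_pos x).append_suf [Letter.neg x]

theorem dcongr_neg_pre_e (x : X) :
    DCongr (rel X) ⟨[], Letter.neg x, []⟩ ⟨[Letter.neg x], Letter.e, []⟩ :=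
  calc DCongr (rel X) ⟨[], Letter.neg x, []⟩ ⟨[Letter.neg x, Letter.pos x], Letter.neg x, []⟩ :=
        dcongr_of_prod_map_val_eq _ (by simp [Letter.val]) rfl
    DCongr (rel X) _ ⟨[Letter.neg x], Letter.e, []⟩ :=
        (dcongr_pos_neg x).append_pre [Letter.neg x]

theorem dcongr_neg_comm_e (x : X) :
    DCongr (rel X) ⟨[Letter.neg x], Letter.e, []⟩ ⟨[], Letter.e, [Letter.neg x]⟩ :=
  (dcongr_neg_pre_e x).symm.trans (dcongr_neg_e_suf x)

/- `x` commutes with the center `e` because its inverse `x⁻¹` does. -/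
theorem dcongr_pos_comm_e (x : X) :
    DCongr (rel X) ⟨[Letter.pos x], Letter.e, []⟩ ⟨[], Letter.e, [Letter.pos x]⟩ :=
  calc DCongr (rel X) ⟨[Letter.pos x], Letter.e, []⟩
          ⟨[Letter.pos x], Letter.e, [Letter.neg x, Letter.pos x]⟩ :=
        dcongr_of_prod_map_val_eq _ rfl (by simp [Letter.val])
    DCongr (rel X) _ ⟨[Letter.pos x, Letter.neg x], Letter.e, [Letter.pos x]⟩ :=
        ((dcongr_neg_comm_e x).symm.append_pre [Letter.pos x]).append_suf [Letter.pos x]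
    DCongr (rel X) _ ⟨[], Letter.e, [Letter.pos x]⟩ :=
        dcongr_of_prod_map_val_eq _ (by simp [Letter.val]) rfl

theorem dcongr_letter_comm_e (y : Letter X) :
    DCongr (rel X) ⟨[y], Letter.e, []⟩ ⟨[], Letter.e, [y]⟩ := by
  cases y with
  | pos x => exact dcongr_pos_comm_e x
  | neg x => exact dcongr_neg_comm_e x
  | e => exact (dcongr_pre_e _).trans (dcongr_suf_e _).symm

theorem dcongr_center_e (p s : List (Letter X)) :
    DCongr (rel X) ⟨p, Letter.e, s⟩ ⟨[], Letter.e, p ++ s⟩ := by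
  induction p with
  | nil => exact DCongr.refl _
  | cons y p ih =>
    exact (ih.append_pre [y]).trans ((dcongr_letter_comm_e y).append_suf (p ++ s))

theorem dcongr_center_neg (p s : List (Letter X)) (x : X) :
    DCongr (rel X) ⟨p, Letter.neg x, s⟩ ⟨[], Letter.e, p ++ Letter.neg x :: s⟩ := by
  have hcen : DCongr (rel X) ⟨p, Letter.neg x, s⟩ ⟨p, Letter.e, Letter.neg x :: s⟩ := by
    simpa using ((dcongr_neg_e_suf x).append_pre p).append_suf s
  exact hcen.trans (dcongr_center_e p _)

theorem dcongr_e_word {a : FD (Letter X)} (h : a.cen.halo = none) :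
    DCongr (rel X) a ⟨[], Letter.e, a.word⟩ := by
  obtain ⟨p, x | x | _, s⟩ := a
  · cases h
  · exact dcongr_center_neg p s x
  · exact (dcongr_center_e p s).trans
      (dcongr_of_prod_map_val_eq _ rfl (by simp [FD.word, Letter.val]))

end Presentation

section NormalForm

variable {X : Type*}

theorem reduced_iff_isReduced {L : List (X × Bool)} : Reduced L ↔ FreeGroup.IsReduced L := by
  have hrel (a b : X × Bool) : ¬(a.1 = b.1 ∧ a.2 = !b.2) ↔ (a.1 = b.1 → a.2 = b.2) := by
    cases a.2 <;> cases b.2 <;> simp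
  exact List.IsChain.iff hrel

theorem reduced_map_true (u : List X) : Reduced (u.map fun y => (y, true)) := by
  rw [reduced_iff_isReduced, FreeGroup.IsReduced, List.isChain_map]
  exact (List.pairwise_of_forall fun _ _ _ => rfl).isChain

theorem reduced_toWord [DecidableEq X] (g : FreeGroup X) : Reduced g.toWord :=
  reduced_iff_isReduced.2 FreeGroup.isReduced_toWord

theorem Reduced.toWord_mk [DecidableEq X] {L : List (X × Bool)} (hL : Reduced L) :
    (FreeGroup.mk L).toWord = L :=
  (reduced_iff_isReduced.1 hL).reduce_eq

theorem eq_map_true_or_exists_first_neg (L : List (X × Bool)) :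
    (∃ u : List X, L = u.map fun y => (y, true)) ∨
      ∃ (u : List X) (x : X) (v : List (X × Bool)),
        L = (u.map fun y => (y, true)) ++ (x, false) :: v := by
  induction L with
  | nil => exact Or.inl ⟨[], rfl⟩
  | cons a L ih =>
    obtain ⟨x, _ | _⟩ := a
    · exact Or.inr ⟨[], x, L, rfl⟩
    · rcases ih with ⟨u, rfl⟩ | ⟨u, y, v, rfl⟩
      · exact Or.inl ⟨x :: u, rfl⟩
      · exact Or.inr ⟨x :: u, y, v, rfl⟩

/-- The element of the free disemigroup whose word is `L` and whose center is the first letter of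
`L` in `X⁻¹`; if there is none, a central letter `e` is put in front of `L`. -/
def centerFirstNeg (L : List (X × Bool)) : FD (Letter X) :=
  match L.dropWhile Prod.snd with
  | [] => ⟨[], Letter.e, L.map pm⟩
  | (x, _) :: v => ⟨(L.takeWhile Prod.snd).map pm, Letter.neg x, v.map pm⟩

theorem centerFirstNeg_map_true (u : List X) :
    centerFirstNeg (u.map fun y => (y, true)) = ⟨[], Letter.e, u.map Letter.pos⟩ := by
  have hdrop : (u.map fun y => (y, true)).dropWhile Prod.snd = [] := by simp
  rw [centerFirstNeg, hdrop, Letter.map_pm_map_true]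

theorem centerFirstNeg_append_neg (u : List X) (x : X) (v : List (X × Bool)) :
    centerFirstNeg ((u.map fun y => (y, true)) ++ (x, false) :: v) =
      ⟨u.map Letter.pos, Letter.neg x, v.map pm⟩ := by
  have hpos : ∀ a ∈ u.map fun y => (y, true), Prod.snd a = true := by simp
  simp only [centerFirstNeg, List.dropWhile_append_of_pos hpos, List.takeWhile_append_of_pos hpos,
    List.dropWhile_cons, List.takeWhile_cons, Bool.false_eq_true, if_false, List.append_nil,
    Letter.map_pm_map_true]

theorem Reduced.centerFirstNeg_mem {L : List (X × Bool)} (hL : Reduced L) :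
    centerFirstNeg L ∈ OmegaE X ∪ OmegaInv X := by
  rcases eq_map_true_or_exists_first_neg L with ⟨u, rfl⟩ | ⟨u, x, v, rfl⟩
  · exact Or.inl ⟨u, centerFirstNeg_map_true u⟩
  · exact Or.inr ⟨x, u, v, hL, centerFirstNeg_append_neg u x v⟩

theorem dcongr_centerFirstNeg (L : List (X × Bool)) :
    DCongr (rel X) ⟨[], Letter.e, L.map pm⟩ (centerFirstNeg L) := by
  rcases eq_map_true_or_exists_first_neg L with ⟨u, rfl⟩ | ⟨u, x, v, rfl⟩
  · rw [centerFirstNeg_map_true, Letter.map_pm_map_true]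
    exact DCongr.refl _
  · rw [centerFirstNeg_append_neg, List.map_append, Letter.map_pm_map_true]
    exact (dcongr_center_neg _ _ x).symm

open Classical in
/-- The normal form with given coordinates. -/
noncomputable def normalForm : FreeGroup X × Option (Σ _ : X, FreeGroup X) → FD (Letter X)
  | (g, none) => centerFirstNeg g.toWord
  | (g, some ⟨x, p⟩) =>
    ⟨p.toWord.map pm, Letter.pos x, ((p * FreeGroup.of x)⁻¹ * g).toWord.map pm⟩

theorem normalForm_mem (t : FreeGroup X × Option (Σ _ : X, FreeGroup X)) :
    normalForm t ∈ OmegaE X ∪ OmegaX X ∪ OmegaInv X := by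
  classical
  obtain ⟨g, _ | ⟨x, p⟩⟩ := t
  · exact Set.union_subset_union_left _ Set.subset_union_left
      (reduced_toWord g).centerFirstNeg_mem
  · exact Or.inl (Or.inr ⟨x, _, _, reduced_toWord _, reduced_toWord _, rfl⟩)

theorem FD.coord_of_halo_eq_none {a : FD (Letter X)} (h : a.cen.halo = none) :
    a.coord = ((a.word.map Letter.val).prod, none) := by
  rw [FD.coord, FD.eval, h, Option.smul_none]

theorem FD.coord_pos (p s : List (Letter X)) (x : X) :
    FD.coord ⟨p, Letter.pos x, s⟩ =
      ((p.map Letter.val).prod * FreeGroup.of x * (s.map Letter.val).prod,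
        some ⟨x, (p.map Letter.val).prod⟩) := by
  simp [FD.coord, FD.eval, FD.word, Letter.val, Letter.halo, mul_assoc]

theorem dcongr_normalForm_pos (p s : List (Letter X)) (x : X) :
    DCongr (rel X) ⟨p, Letter.pos x, s⟩ (normalForm (FD.coord ⟨p, Letter.pos x, s⟩)) := by
  classical
  rw [FD.coord_pos, normalForm, inv_mul_cancel_left]
  exact dcongr_of_prod_map_val_eq _ (Letter.prod_map_val_map_pm_toWord _).symm
    (Letter.prod_map_val_map_pm_toWord _).symm

theorem dcongr_normalForm_of_halo_eq_none {a : FD (Letter X)} (ha : a.cen.halo = none) :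
    DCongr (rel X) a (normalForm a.coord) := by
  classical
  rw [FD.coord_of_halo_eq_none ha, normalForm]
  calc DCongr (rel X) a ⟨[], Letter.e, a.word⟩ := dcongr_e_word ha
    DCongr (rel X) _ ⟨[], Letter.e, (a.word.map Letter.val).prod.toWord.map pm⟩ :=
        dcongr_of_prod_map_val_eq _ rfl (Letter.prod_map_val_map_pm_toWord _).symm
    DCongr (rel X) _ (centerFirstNeg (a.word.map Letter.val).prod.toWord) :=
        dcongr_centerFirstNeg _

theorem dcongr_normalForm (a : FD (Letter X)) : DCongr (rel X) a (normalForm a.coord) := by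
  obtain ⟨p, x | x | _, s⟩ := a
  · exact dcongr_normalForm_pos p s x
  · exact dcongr_normalForm_of_halo_eq_none rfl
  · exact dcongr_normalForm_of_halo_eq_none rfl

theorem normalForm_coord_of_halo_eq_none {a : FD (Letter X)} {L : List (X × Bool)}
    (ha : a.cen.halo = none) (hL : Reduced L)
    (hword : (a.word.map Letter.val).prod = FreeGroup.mk L) :
    normalForm a.coord = centerFirstNeg L := by
  classical
  rw [FD.coord_of_halo_eq_none ha, normalForm, hword, hL.toWord_mk]

theorem normalForm_coord_of_mem {a : FD (Letter X)}
    (ha : a ∈ OmegaE X ∪ OmegaX X ∪ OmegaInv X) : normalForm a.coord = a := by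
  classical
  rcases ha with (⟨u, rfl⟩ | ⟨x, u, v, hu, hv, rfl⟩) | ⟨x, u, v, huv, rfl⟩
  · refine (normalForm_coord_of_halo_eq_none rfl (reduced_map_true u) ?_).trans
      (centerFirstNeg_map_true u)
    rw [← Letter.prod_map_val_map_pm, Letter.map_pm_map_true]
    exact one_mul _
  · rw [FD.coord_pos, Letter.prod_map_val_map_pm, Letter.prod_map_val_map_pm, normalForm,
      inv_mul_cancel_left, hu.toWord_mk, hv.toWord_mk]
  · refine (normalForm_coord_of_halo_eq_none rfl huv ?_).trans (centerFirstNeg_append_neg u x v)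
    rw [← Letter.prod_map_val_map_pm, List.map_append, Letter.map_pm_map_true]
    rfl

end NormalForm

/-- Every element of Disgp⟨X^{±1} ∪ {e} | S⟩ is the class of exactly one
element of Ω_e ∪ Ω_X ∪ Ω_{X⁻¹}: the quotient map restricts to a bijection
from Ω_e ∪ Ω_X ∪ Ω_{X⁻¹} onto the quotient. -/
theorem normal_forms_unique (X : Type*) (c : DQ X) :
    ∃! a : FD (Letter X), a ∈ OmegaE X ∪ OmegaX X ∪ OmegaInv X ∧ cls a = c := by
  obtain ⟨a, rfl⟩ := Quot.exists_rep c
  refine ⟨normalForm a.coord,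
    ⟨normalForm_mem _, cls_eq_cls_iff.2 (dcongr_normalForm a).symm⟩, fun b ⟨hb, hba⟩ => ?_⟩
  have hcoord : b.coord = a.coord := (cls_eq_cls_iff.1 hba).coord_eq
  rw [← hcoord, normalForm_coord_of_mem hb]
end

section
/- In Disgp⟨X^{±1} ∪ {e} | S⟩, for every normal form [q]_n ∈ Ω_e ∪ Ω_X ∪ Ω_{X⁻¹} and every [p]_m ∈ Ω_e ∪ Ω_{X⁻¹}: (class of [q]_n) ⊢ (class of [p]_m) equals the class of [e(q̂p)]_1 if the reduced word q̂p lies in X*, and equals the class of [q̂p]_{λ(q̂p)} otherwise; similarly, (class of [p]_m) ⊣ (class of [q]_n) equals the class of [e(p̂q)]_1 if p̂q ∈ X*, and equals the class of [p̂q]_{λ(p̂q)} otherwise. -/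
/-!
The elements whose center is not a letter `x ∈ X` form the group part, on which the center
carries no information. Indeed `x⁻¹ = x⁻¹ ⊣ (x ⊢ x⁻¹) = (x⁻¹ ⊣ x) ⊣ x⁻¹ = e ⊣ x⁻¹`, so every
such element can be recentered at an `e`, and `e` commutes with every letter (`y ⊢ e = e ⊣ y`),
so that everything to its left can be moved to its right. To the right of the center only the
underlying word of a relation matters; hence letters `e` can be erased and inverse pairs
cancelled there, and the class of the element is determined by `ŵ`. Both products in the theorem
have the center of `p`, so they lie in the group part, and so does the claimed normal form.
-/

namespace FD

@[simp]
theorem word_vd {Y : Type*} (a b : FD Y) : (a.vd b).word = a.word ++ b.word := by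
  simp [vd, word]

@[simp]
theorem word_dv {Y : Type*} (a b : FD Y) : (a.dv b).word = a.word ++ b.word := by
  simp [dv, word]

/-- The elements `[w]_m` representing the group part of the free digroup: those whose center lies in
`X⁻¹ ∪ {e}`. The condition is encoded by excluding the centers in `X`. -/
def InGroupPart {X : Type*} (a : FD (Letter X)) : Prop :=
  ∀ x, a.cen ≠ Letter.pos x

theorem InGroupPart.vd {X : Type*} {p : FD (Letter X)} (hp : p.InGroupPart) (q : FD (Letter X)) :
    (q.vd p).InGroupPart :=
  hp

theorem InGroupPart.dv {X : Type*} {p : FD (Letter X)} (hp : p.InGroupPart) (q : FD (Letter X)) :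
    (p.dv q).InGroupPart :=
  hp

theorem inGroupPart_of_mem_omega {X : Type*} {p : FD (Letter X)}
    (hp : p ∈ OmegaE X ∪ OmegaInv X) : p.InGroupPart := by
  rcases hp with ⟨u, rfl⟩ | ⟨x, u, v, -, rfl⟩ <;> simp [InGroupPart]

end FD

namespace DCongr

section Context

variable {Y : Type*} {r : FD Y → FD Y → Prop} {a b : FD Y}

instance inst_s13 : Trans (DCongr r) (DCongr r) (DCongr r) := ⟨.trans⟩

theorem prepend (u : List Y) (h : DCongr r a b) :
    DCongr r ⟨u ++ a.pre, a.cen, a.suf⟩ ⟨u ++ b.pre, b.cen, b.suf⟩ := by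
  cases u with
  | nil => exact h
  | cons y u => exact .vd (.refl ⟨[], y, u⟩) h

theorem append (h : DCongr r a b) (v : List Y) :
    DCongr r ⟨a.pre, a.cen, a.suf ++ v⟩ ⟨b.pre, b.cen, b.suf ++ v⟩ := by
  cases v with
  | nil => simpa only [List.append_nil] using h
  | cons y v => simpa [FD.dv] using DCongr.dv h (.refl ⟨[], y, v⟩)

theorem replace_word_suf (h : DCongr r a b) (p : List Y) (c : Y) (s t : List Y) :
    DCongr r ⟨p, c, s ++ a.word ++ t⟩ ⟨p, c, s ++ b.word ++ t⟩ := by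
  simpa [FD.dv, FD.word] using append (.dv (.refl ⟨p, c, s⟩) h) t

end Context

variable {X : Type*}

theorem pos_vd_neg (x : X) :
    DCongr (rel X) ⟨[Letter.pos x], Letter.neg x, []⟩ ⟨[], Letter.e, []⟩ :=
  .of (.inl ⟨x, rfl, rfl⟩)

theorem neg_dv_pos (x : X) :
    DCongr (rel X) ⟨[], Letter.neg x, [Letter.pos x]⟩ ⟨[], Letter.e, []⟩ :=
  .of (.inr (.inl ⟨x, rfl, rfl⟩))

theorem dv_e (y : Letter X) : DCongr (rel X) ⟨[], y, [Letter.e]⟩ ⟨[], y, []⟩ :=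
  .of (.inr (.inr (.inl ⟨y, rfl, rfl⟩)))

theorem e_vd (y : Letter X) : DCongr (rel X) ⟨[Letter.e], y, []⟩ ⟨[], y, []⟩ :=
  .of (.inr (.inr (.inr ⟨y, rfl, rfl⟩)))

theorem erase_e_suf (p : List (Letter X)) (c : Letter X) (s t : List (Letter X)) :
    DCongr (rel X) ⟨p, c, s ++ Letter.e :: t⟩ ⟨p, c, s ++ t⟩ := by
  rcases List.eq_nil_or_concat s with rfl | ⟨s, y, rfl⟩
  · simpa using prepend p (append (dv_e c) t)
  · simpa [FD.word] using replace_word_suf (dv_e y) p c s t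

theorem cancel_suf (p : List (Letter X)) (c : Letter X) (x : X) (b : Bool)
    (s t : List (Letter X)) :
    DCongr (rel X) ⟨p, c, s ++ pm (x, b) :: pm (x, !b) :: t⟩ ⟨p, c, s ++ t⟩ := by
  refine .trans ?_ (erase_e_suf p c s t)
  cases b with
  | false => simpa [FD.word, pm] using replace_word_suf (neg_dv_pos x) p c s t
  | true => simpa [FD.word, pm] using replace_word_suf (pos_vd_neg x) p c s t

theorem strip_suf (p : List (Letter X)) (c : Letter X) (s t : List (Letter X)) :
    DCongr (rel X) ⟨p, c, s ++ t⟩ ⟨p, c, s ++ (strip t).map pm⟩ := by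
  induction t generalizing s with
  | nil => exact .refl _
  | cons y t ih =>
    cases y with
    | pos x => simpa [strip, pm] using ih (s ++ [Letter.pos x])
    | neg x => simpa [strip, pm] using ih (s ++ [Letter.neg x])
    | e => exact .trans (erase_e_suf p c s t) (ih s)

theorem red_suf (p : List (Letter X)) (c : Letter X) {L M : List (X × Bool)}
    (h : FreeGroup.Red L M) : DCongr (rel X) ⟨p, c, L.map pm⟩ ⟨p, c, M.map pm⟩ := by
  induction h with
  | refl => exact .refl _
  | tail _ hstep ih =>
    refine .trans ih ?_
    cases hstep
    simpa only [List.map_append, List.map_cons] using cancel_suf p c _ _ _ _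

theorem hat_suf (p : List (Letter X)) (c : Letter X) (s : List (Letter X)) :
    DCongr (rel X) ⟨p, c, s⟩ ⟨p, c, (hat s).map pm⟩ := by
  let := Classical.decEq X
  exact .trans (strip_suf p c [] s) (red_suf p c FreeGroup.reduce.red)

theorem neg_congr_e_dv (x : X) :
    DCongr (rel X) ⟨[], Letter.neg x, []⟩ ⟨[], Letter.e, [Letter.neg x]⟩ :=
  calc
    DCongr (rel X) ⟨[], Letter.neg x, []⟩ ⟨[], Letter.neg x, [Letter.pos x, Letter.neg x]⟩ :=
      .symm (cancel_suf [] (Letter.neg x) x true [] [])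
    DCongr (rel X) _ ⟨[], Letter.e, [Letter.neg x]⟩ := append (neg_dv_pos x) [Letter.neg x]

theorem neg_vd_e (x : X) :
    DCongr (rel X) ⟨[Letter.neg x], Letter.e, []⟩ ⟨[], Letter.neg x, []⟩ :=
  calc
    DCongr (rel X) ⟨[Letter.neg x], Letter.e, []⟩
        ⟨[Letter.neg x, Letter.pos x], Letter.neg x, []⟩ :=
      prepend [Letter.neg x] (.symm (pos_vd_neg x))
    DCongr (rel X) _ ⟨[Letter.e], Letter.neg x, []⟩ :=
      .vd (neg_dv_pos x) (.refl ⟨[], Letter.neg x, []⟩)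
    DCongr (rel X) _ ⟨[], Letter.neg x, []⟩ := e_vd _

theorem pos_vd_e (x : X) :
    DCongr (rel X) ⟨[Letter.pos x], Letter.e, []⟩ ⟨[], Letter.e, [Letter.pos x]⟩ :=
  calc
    DCongr (rel X) ⟨[Letter.pos x], Letter.e, []⟩ ⟨[Letter.pos x], Letter.neg x, [Letter.pos x]⟩ :=
      prepend [Letter.pos x] (.symm (neg_dv_pos x))
    DCongr (rel X) _ ⟨[], Letter.e, [Letter.pos x]⟩ := append (pos_vd_neg x) [Letter.pos x]

theorem vd_e_comm (y : Letter X) :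
    DCongr (rel X) ⟨[y], Letter.e, []⟩ ⟨[], Letter.e, [y]⟩ := by
  cases y with
  | pos x => exact pos_vd_e x
  | neg x => exact .trans (neg_vd_e x) (neg_congr_e_dv x)
  | e => exact .trans (e_vd _) (.symm (dv_e _))

theorem vd_e_comm_word (p s : List (Letter X)) :
    DCongr (rel X) ⟨p, Letter.e, s⟩ ⟨[], Letter.e, p ++ s⟩ := by
  induction p using List.reverseRecOn generalizing s with
  | nil => exact .refl _
  | append_singleton p y ih =>
    calc
      DCongr (rel X) ⟨p ++ [y], Letter.e, s⟩ ⟨p, Letter.e, y :: s⟩ := by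
        simpa using prepend p (append (vd_e_comm y) s)
      DCongr (rel X) _ ⟨[], Letter.e, p ++ [y] ++ s⟩ := by simpa using ih (y :: s)

theorem congr_e_dv_word {a : FD (Letter X)} (ha : a.InGroupPart) :
    DCongr (rel X) a ⟨[], Letter.e, a.word⟩ := by
  obtain ⟨p, c, s⟩ := a
  cases c with
  | pos x => exact absurd rfl (ha x)
  | neg x =>
    calc
      DCongr (rel X) ⟨p, Letter.neg x, s⟩ ⟨p, Letter.e, Letter.neg x :: s⟩ := by
        simpa using prepend p (append (neg_congr_e_dv x) s)
      DCongr (rel X) _ ⟨[], Letter.e, p ++ Letter.neg x :: s⟩ := vd_e_comm_word _ _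
  | e =>
    calc
      DCongr (rel X) ⟨p, Letter.e, s⟩ ⟨[], Letter.e, p ++ s⟩ := vd_e_comm_word p s
      DCongr (rel X) _ ⟨[], Letter.e, p ++ Letter.e :: s⟩ := .symm (erase_e_suf [] _ p s)

theorem of_hat_word_eq {a b : FD (Letter X)} (ha : a.InGroupPart) (hb : b.InGroupPart)
    (h : hat a.word = hat b.word) : DCongr (rel X) a b :=
  calc
    DCongr (rel X) a ⟨[], Letter.e, a.word⟩ := congr_e_dv_word ha
    DCongr (rel X) _ ⟨[], Letter.e, (hat a.word).map pm⟩ := hat_suf _ _ _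
    DCongr (rel X) _ ⟨[], Letter.e, b.word⟩ := h ▸ .symm (hat_suf _ _ _)
    DCongr (rel X) _ b := .symm (congr_e_dv_word hb)

end DCongr

section NormalForm

variable {X : Type*}

theorem strip_map_pm (L : List (X × Bool)) : strip (L.map pm) = L := by
  induction L with
  | nil => rfl
  | cons a L ih =>
    obtain ⟨x, _ | _⟩ := a
    all_goals exact congrArg (_ :: ·) ih

theorem toNF_succ {L : List (X × Bool)} {i : ℕ} (hi : i < L.length) :
    toNF L (i + 1) = ⟨(L.take i).map pm, pm L[i], (L.drop (i + 1)).map pm⟩ := by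
  simp [toNF, hi]

theorem word_toNF_succ {L : List (X × Bool)} {i : ℕ} (hi : i < L.length) :
    (toNF L (i + 1)).word = L.map pm := by
  simp only [toNF_succ hi, FD.word]
  rw [← List.map_cons, ← List.map_append, List.cons_getElem_drop_succ, List.take_append_drop]

theorem findIdx_neg_lt_length {L : List (X × Bool)} (h : ¬L.all (fun a => a.2)) :
    L.findIdx (fun a => !a.2) < L.length := by
  simpa [List.findIdx_lt_length] using h

theorem inGroupPart_toNF_lam {L : List (X × Bool)} (h : ¬L.all (fun a => a.2)) :
    (toNF L (lam L)).InGroupPart := by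
  have hi := findIdx_neg_lt_length h
  have hneg : L[L.findIdx (fun a => !a.2)].2 = false := by
    simpa using List.findIdx_getElem (w := hi)
  intro x
  rw [lam, toNF_succ hi]
  simp [pm, hneg]

/-- The normal form in `Ω_e ∪ Ω_{X⁻¹}` of the group-part element with reduced word `L`: `[eL]₁` if
`L ∈ X*`, and `[L]_{λ(L)}` otherwise. It is defined for all words `L`, reduced or not. -/
def groupPartNF (L : List (X × Bool)) : FD (Letter X) :=
  if L.all (fun a => a.2) then ⟨[], Letter.e, L.map pm⟩ else toNF L (lam L)

theorem inGroupPart_groupPartNF (L : List (X × Bool)) : (groupPartNF L).InGroupPart := by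
  rw [groupPartNF]
  split_ifs with h
  · simp [FD.InGroupPart]
  · exact inGroupPart_toNF_lam h

theorem strip_word_groupPartNF (L : List (X × Bool)) : strip (groupPartNF L).word = L := by
  rw [groupPartNF]
  split_ifs with h
  · exact strip_map_pm L
  · rw [lam, word_toNF_succ (findIdx_neg_lt_length h), strip_map_pm]

theorem hat_word_groupPartNF_hat (w : List (Letter X)) :
    hat (groupPartNF (hat w)).word = hat w := by
  let := Classical.decEq X
  rw [hat, strip_word_groupPartNF]
  exact FreeGroup.reduce.idem

theorem cls_eq_groupPartNF {a : FD (Letter X)} (ha : a.InGroupPart) :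
    cls a = cls (groupPartNF (hat a.word)) :=
  Quot.sound (.of_hat_word_eq ha (inGroupPart_groupPartNF _) (hat_word_groupPartNF_hat _).symm)

end NormalForm

theorem mul_with_group_part_general {X : Type*} (q : FD (Letter X)) {p : FD (Letter X)}
    (hp : p.InGroupPart) :
    DQ.vd (cls q) (cls p) = cls (groupPartNF (hat (q.word ++ p.word))) ∧
      DQ.dv (cls p) (cls q) = cls (groupPartNF (hat (p.word ++ q.word))) := by
  rw [← FD.word_vd, ← FD.word_dv]
  exact ⟨cls_eq_groupPartNF (hp.vd q), cls_eq_groupPartNF (hp.dv q)⟩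

/-- Multiplication with an element of Ω_e ∪ Ω_{X⁻¹}: for any normal forms
[q]_n ∈ Ω_e ∪ Ω_X ∪ Ω_{X⁻¹} and [p]_m ∈ Ω_e ∪ Ω_{X⁻¹},
[q]_n ⊢ [p]_m = [e(q̂p)]₁ if q̂p ∈ X* and [q̂p]_{λ(q̂p)} otherwise, and
[p]_m ⊣ [q]_n = [e(p̂q)]₁ if p̂q ∈ X* and [p̂q]_{λ(p̂q)} otherwise. -/
theorem mul_with_group_part (X : Type*) (q p : FD (Letter X))
    (hq : q ∈ OmegaE X ∪ OmegaX X ∪ OmegaInv X)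
    (hp : p ∈ OmegaE X ∪ OmegaInv X) :
    (DQ.vd (cls q) (cls p) =
      if (hat (q.word ++ p.word)).all (fun a => a.2) then
        cls ⟨[], Letter.e, (hat (q.word ++ p.word)).map pm⟩
      else
        cls (toNF (hat (q.word ++ p.word)) (lam (hat (q.word ++ p.word))))) ∧
    (DQ.dv (cls p) (cls q) =
      if (hat (p.word ++ q.word)).all (fun a => a.2) then
        cls ⟨[], Letter.e, (hat (p.word ++ q.word)).map pm⟩
      else
        cls (toNF (hat (p.word ++ q.word)) (lam (hat (p.word ++ q.word))))) := by
  simpa only [groupPartNF, apply_ite cls] using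
    mul_with_group_part_general q (FD.inGroupPart_of_mem_omega hp)
end
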